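/- For every g ∈ S, the transitivity set H(g) = { l ∈ L : g·l is reachable from g } is a subgroup of L. -/

import Mathlib

/-!
Call two points of `S` adjacent if they differ by right multiplication by an element of
`N⁻ ∪ N⁺`. Chains of adjacent points can be reversed, since `N⁻ ∪ N⁺` is closed under inverses.
They can be translated on the left by `Γ`, which preserves `S` and commutes with right
multiplication, and on the right by `L`, which preserves `S` and normalizes `N⁻` and `N⁺`. Hence
reachability is an equivalence relation on `S` that is invariant under right multiplication by `L`,
and for such a relation `∼` the elements `l` of `L` with `g ∼ g * l` form a subgroup.
-/

/-- `g'` is reachable from `g`: there is a finite sequence `h₁, …, h_k` of elements of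
`N⁻ ∪ N⁺` and `γ ∈ Γ` such that all the partial products `g·h₁⋯h_r` lie in `S`
and `γ·g·h₁⋯h_k = g'`. -/
def Reachable {G : Type*} [Group G] (Γ Nm Np : Subgroup G) (S : Set G) (g g' : G) : Prop :=
  ∃ hs : List G, (∀ h ∈ hs, h ∈ (↑Nm ∪ ↑Np : Set G)) ∧
    (∀ r ≤ hs.length, g * (hs.take r).prod ∈ S) ∧
    ∃ γ ∈ Γ, γ * (g * hs.prod) = g'

/-- Adjacency of two points of `S` that differ by right multiplication by an element of `N`. The
chains of horospherical moves staying in `S` are its reflexive transitive closure. -/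
def StepIn {M : Type*} [Monoid M] (N S : Set M) (a b : M) : Prop :=
  a ∈ S ∧ b ∈ S ∧ ∃ n ∈ N, a * n = b

section Monoid

variable {M : Type*} [Monoid M] {N S : Set M} {a b c n : M}

theorem StepIn.mul_left (hS : ∀ s ∈ S, c * s ∈ S) (h : StepIn N S a b) :
    StepIn N S (c * a) (c * b) := by
  obtain ⟨ha, hb, n, hn, rfl⟩ := h
  exact ⟨hS a ha, hS _ hb, n, hn, mul_assoc c a n⟩

theorem forall_mul_prod_take_cons_mem_iff {t : List M} :
    (∀ r ≤ (n :: t).length, a * ((n :: t).take r).prod ∈ S) ↔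
      a ∈ S ∧ ∀ r ≤ t.length, a * n * (t.take r).prod ∈ S := by
  constructor
  · intro h
    exact ⟨by simpa using h 0 (Nat.zero_le _),
      fun r hr => by simpa [mul_assoc] using h (r + 1) (Nat.succ_le_succ hr)⟩
  · rintro ⟨ha, ht⟩ (_ | r) hr
    · simpa using ha
    · simpa [mul_assoc] using ht r (Nat.le_of_succ_le_succ hr)

theorem reflTransGen_stepIn_iff_exists_list (ha : a ∈ S) :
    Relation.ReflTransGen (StepIn N S) a b ↔
      ∃ hs : List M, (∀ h ∈ hs, h ∈ N) ∧
        (∀ r ≤ hs.length, a * (hs.take r).prod ∈ S) ∧ a * hs.prod = b := by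
  constructor
  · intro hab
    induction hab using Relation.ReflTransGen.head_induction_on with
    | refl => exact ⟨[], by simp, by simpa using ha, by simp⟩
    | head hstep _ ih =>
      obtain ⟨_, hmid, n, hn, rfl⟩ := hstep
      obtain ⟨hs, hsN, hsS, hprod⟩ := ih hmid
      exact ⟨n :: hs, List.forall_mem_cons.2 ⟨hn, hsN⟩,
        forall_mul_prod_take_cons_mem_iff.2 ⟨ha, hsS⟩, by rwa [List.prod_cons, ← mul_assoc]⟩
  · rintro ⟨hs, hsN, hsS, rfl⟩
    induction hs generalizing a with
    | nil => simpa using Relation.ReflTransGen.refl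
    | cons n t ih =>
      obtain ⟨hn, htN⟩ := List.forall_mem_cons.1 hsN
      obtain ⟨-, htS⟩ := forall_mul_prod_take_cons_mem_iff.1 hsS
      have hmid : a * n ∈ S := by simpa using htS 0 (Nat.zero_le _)
      rw [List.prod_cons, ← mul_assoc]
      exact (ih hmid htN htS).head ⟨ha, hmid, n, hn, rfl⟩

end Monoid

section Group

variable {G : Type*} [Group G] {N S : Set G} {a b l : G}

theorem StepIn.symm (hN : ∀ n ∈ N, n⁻¹ ∈ N) (h : StepIn N S a b) : StepIn N S b a := by
  obtain ⟨ha, hb, n, hn, rfl⟩ := h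
  exact ⟨hb, ha, n⁻¹, hN n hn, mul_inv_cancel_right a n⟩

theorem StepIn.mul_right (hN : ∀ n ∈ N, l⁻¹ * n * l ∈ N) (hS : ∀ s ∈ S, s * l ∈ S)
    (h : StepIn N S a b) : StepIn N S (a * l) (b * l) := by
  obtain ⟨ha, hb, n, hn, rfl⟩ := h
  exact ⟨hS a ha, hS _ hb, l⁻¹ * n * l, hN n hn, by group⟩

end Group

section ReachableMod

variable {G : Type*} [Group G]

/-- Reachability modulo `Γ` by chains in `S` of right multiplications by elements of an arbitrary
set `N`. The element of `Γ` is applied to the target, so that it is the inverse of the one in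
`Reachable`, and the empty chain is allowed at points outside `S`. -/
def ReachableMod (Γ : Subgroup G) (N S : Set G) (a b : G) : Prop :=
  ∃ γ ∈ Γ, Relation.ReflTransGen (StepIn N S) a (γ * b)

variable {Γ Nm Np : Subgroup G} {N S : Set G} {a b c g g' l : G}

theorem reachable_iff_reachableMod (hg : g ∈ S) :
    Reachable Γ Nm Np S g g' ↔ ReachableMod Γ (Nm ∪ Np) S g g' := by
  simp only [ReachableMod, reflTransGen_stepIn_iff_exists_list hg]
  constructor
  · rintro ⟨hs, hsN, hsS, γ, hγ, rfl⟩
    exact ⟨γ⁻¹, Γ.inv_mem hγ, hs, hsN, hsS, (inv_mul_cancel_left γ _).symm⟩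
  · rintro ⟨γ, hγ, hs, hsN, hsS, hprod⟩
    exact ⟨hs, hsN, hsS, γ⁻¹, Γ.inv_mem hγ, inv_mul_eq_of_eq_mul hprod⟩

namespace ReachableMod

theorem refl (a : G) : ReachableMod Γ N S a a :=
  ⟨1, Γ.one_mem, by rw [one_mul]⟩

theorem symm (hN : ∀ n ∈ N, n⁻¹ ∈ N) (hS : ∀ s ∈ S, ∀ γ ∈ Γ, γ * s ∈ S)
    (h : ReachableMod Γ N S a b) : ReachableMod Γ N S b a := by
  obtain ⟨γ, hγ, hab⟩ := h
  have hγ' : γ⁻¹ ∈ Γ := Γ.inv_mem hγ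
  have : Std.Symm (StepIn N S) := ⟨fun _ _ => StepIn.symm hN⟩
  have hba : Relation.ReflTransGen (StepIn N S) (γ * b) a := symm_of _ hab
  refine ⟨γ⁻¹, hγ', ?_⟩
  simpa only [Function.onFun, inv_mul_cancel_left] using
    hba.lift (γ⁻¹ * ·) fun _ _ => StepIn.mul_left fun s hs => hS s hs γ⁻¹ hγ'

theorem trans (hS : ∀ s ∈ S, ∀ γ ∈ Γ, γ * s ∈ S) (hab : ReachableMod Γ N S a b)
    (hbc : ReachableMod Γ N S b c) : ReachableMod Γ N S a c := by
  obtain ⟨γ, hγ, hab⟩ := hab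
  obtain ⟨δ, hδ, hbc⟩ := hbc
  refine ⟨γ * δ, Γ.mul_mem hγ hδ, hab.trans ?_⟩
  simpa only [Function.onFun, mul_assoc] using
    hbc.lift (γ * ·) fun _ _ => StepIn.mul_left fun s hs => hS s hs γ hγ

theorem mul_right (hN : ∀ n ∈ N, l⁻¹ * n * l ∈ N) (hS : ∀ s ∈ S, s * l ∈ S)
    (h : ReachableMod Γ N S a b) : ReachableMod Γ N S (a * l) (b * l) := by
  obtain ⟨γ, hγ, hab⟩ := h
  refine ⟨γ, hγ, ?_⟩
  simpa only [Function.onFun, mul_assoc] using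
    hab.lift (· * l) fun _ _ => StepIn.mul_right hN hS

end ReachableMod

end ReachableMod

theorem transitivity_set_is_subgroup_general {G : Type*} [Group G]
    (Γ L : Subgroup G) (N S : Set G)
    (hN : ∀ n ∈ N, n⁻¹ ∈ N)
    (hNL : ∀ l ∈ L, ∀ n ∈ N, l * n * l⁻¹ ∈ N)
    (hSΓ : ∀ s ∈ S, ∀ γ ∈ Γ, γ * s ∈ S)
    (hSL : ∀ s ∈ S, ∀ l ∈ L, s * l ∈ S)
    (g : G) :
    ∃ H : Subgroup G, H ≤ L ∧
      (H : Set G) = {l : G | l ∈ L ∧ ReachableMod Γ N S g (g * l)} := by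
  have mul_right {l a b : G} (hl : l ∈ L) (h : ReachableMod Γ N S a b) :
      ReachableMod Γ N S (a * l) (b * l) :=
    h.mul_right (by simpa only [inv_inv] using hNL l⁻¹ (L.inv_mem hl)) fun s hs => hSL s hs l hl
  refine ⟨{ carrier := {l : G | l ∈ L ∧ ReachableMod Γ N S g (g * l)}
            one_mem' := ⟨L.one_mem, by simpa only [mul_one] using ReachableMod.refl g⟩
            mul_mem' := ?_
            inv_mem' := ?_ }, fun l hl => hl.1, rfl⟩
  · rintro l m ⟨hl, hgl⟩ ⟨hm, hgm⟩
    have hgm_glm : ReachableMod Γ N S (g * m) (g * (l * m)) := by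
      simpa only [mul_assoc] using mul_right hm hgl
    exact ⟨L.mul_mem hl hm, hgm.trans hSΓ hgm_glm⟩
  · rintro l ⟨hl, hgl⟩
    have hgl_inv : ReachableMod Γ N S (g * l⁻¹) g := by
      simpa only [mul_inv_cancel_right] using mul_right (L.inv_mem hl) hgl
    exact ⟨L.inv_mem hl, hgl_inv.symm hN hSΓ⟩

/-- For every `g ∈ S`, the transitivity set
`H(g) = { l ∈ L : g·l is reachable from g }` is a subgroup of `L`. -/
theorem transitivity_set_is_subgroup {G : Type*} [Group G]
    (Γ Nm Np L : Subgroup G) (S : Set G)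
    (hnormm : ∀ l ∈ L, ∀ n ∈ Nm, l * n * l⁻¹ ∈ Nm)
    (hnormp : ∀ l ∈ L, ∀ n ∈ Np, l * n * l⁻¹ ∈ Np)
    (hSΓ : ∀ s ∈ S, ∀ γ ∈ Γ, γ * s ∈ S)
    (hSL : ∀ s ∈ S, ∀ l ∈ L, s * l ∈ S)
    (g : G) (hg : g ∈ S) :
    ∃ H : Subgroup G, H ≤ L ∧
      (H : Set G) = {l : G | l ∈ L ∧ Reachable Γ Nm Np S g (g * l)} := by
  simpa only [reachable_iff_reachableMod hg] using
    transitivity_set_is_subgroup_general Γ L (Nm ∪ Np) S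
      (fun _ hn => hn.imp Nm.inv_mem Np.inv_mem)
      (fun l hl n hn => hn.imp (hnormm l hl n) (hnormp l hl n)) hSΓ hSL g
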